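/- Let γ be a real number with 0 < γ < 1 and let H be a real number with H ≥ 1. Then for every natural number T, ∑_{t=1}^{T} 2H · min(1, H·γ^t) ≤ 2H·(log H + 1)/(1−γ). -/

import Mathlib

/-!
The summands are controlled by the potential `Φ x = ∫₀ˣ min 1 s⁻¹ ds`, which is `x` on `[0, 1]` and
`1 + log x` on `[1, ∞)`. Since the integrand is nonincreasing,
`Φ x - Φ (γ x) ≥ (x - γ x) * min 1 x⁻¹ = (1 - γ) * min 1 x`. At `x = H γ ^ t` the left-hand side
telescopes in `t`, which leaves at most `Φ H ≤ log⁺ H + 1`.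
-/

open Finset Real

/-- The potential `Φ x = ∫₀ˣ min 1 s⁻¹ ds` on `[0, ∞)`, in closed form; its decrease from `x` to
`x * γ` pays for the summand `min 1 x`. -/
noncomputable def gapPotential (x : ℝ) : ℝ := log⁺ x + min 1 x

section gapPotential

variable {x γ : ℝ}

theorem gapPotential_of_le_one (hx₀ : 0 ≤ x) (hx₁ : x ≤ 1) : gapPotential x = x := by
  rw [gapPotential, (posLog_eq_zero_iff x).2 (by rwa [abs_of_nonneg hx₀]), min_eq_right hx₁,
    zero_add]

theorem gapPotential_of_one_le (hx : 1 ≤ x) : gapPotential x = log x + 1 := by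
  rw [gapPotential, posLog_eq_log (hx.trans (le_abs_self x)), min_eq_left hx]

theorem gapPotential_nonneg (hx : 0 ≤ x) : 0 ≤ gapPotential x :=
  add_nonneg posLog_nonneg (le_min zero_le_one hx)

theorem gapPotential_le_posLog_add_one (x : ℝ) : gapPotential x ≤ log⁺ x + 1 := by
  unfold gapPotential
  gcongr
  exact min_le_left 1 x

theorem one_sub_mul_min_one_le_gapPotential_sub (hγ₀ : 0 ≤ γ) (hγ₁ : γ ≤ 1) (hx : 0 ≤ x) :
    (1 - γ) * min 1 x ≤ gapPotential x - gapPotential (x * γ) := by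
  rcases le_total x 1 with hx₁ | hx₁
  · rw [min_eq_right hx₁, gapPotential_of_le_one hx hx₁,
      gapPotential_of_le_one (mul_nonneg hx hγ₀) (mul_le_one₀ hx₁ hγ₀ hγ₁)]
    linarith
  have hx_pos : 0 < x := zero_lt_one.trans_le hx₁
  rw [min_eq_left hx₁, gapPotential_of_one_le hx₁]
  rcases le_total (x * γ) 1 with hxγ | hxγ
  · rw [gapPotential_of_le_one (mul_nonneg hx hγ₀) hxγ]
    have hγx : γ ≤ x⁻¹ := by rwa [← one_div, le_div_iff₀' hx_pos]
    have hlog : (x - 1) * γ ≤ log x :=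
      calc (x - 1) * γ ≤ (x - 1) * x⁻¹ := by gcongr
        _ = 1 - x⁻¹ := by field_simp
        _ ≤ log x := one_sub_inv_le_log_of_pos hx_pos
    linarith
  · have hγ_pos : 0 < γ := pos_of_mul_pos_right (zero_lt_one.trans_le hxγ) hx
    rw [gapPotential_of_one_le hxγ, log_mul hx_pos.ne' hγ_pos.ne']
    linarith [log_le_sub_one_of_pos hγ_pos]

end gapPotential

theorem sum_range_min_one_mul_pow_le {γ H : ℝ} (hγ₀ : 0 ≤ γ) (hγ₁ : γ < 1) (hH : 0 ≤ H) (T : ℕ) :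
    ∑ t ∈ range T, min 1 (H * γ ^ t) ≤ (log⁺ H + 1) / (1 - γ) := by
  rw [le_div_iff₀' (sub_pos.2 hγ₁), mul_sum]
  calc ∑ t ∈ range T, (1 - γ) * min 1 (H * γ ^ t)
      ≤ ∑ t ∈ range T, (gapPotential (H * γ ^ t) - gapPotential (H * γ ^ (t + 1))) := by
        gcongr with t
        rw [pow_succ, ← mul_assoc]
        exact one_sub_mul_min_one_le_gapPotential_sub hγ₀ hγ₁.le (by positivity)
    _ = gapPotential H - gapPotential (H * γ ^ T) := by
        rw [sum_range_sub' fun t ↦ gapPotential (H * γ ^ t), pow_zero, mul_one]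
    _ ≤ gapPotential H := sub_le_self _ (gapPotential_nonneg (by positivity))
    _ ≤ log⁺ H + 1 := gapPotential_le_posLog_add_one H

theorem cumulative_gap_le_general {γ H : ℝ} (hγ₀ : 0 ≤ γ) (hγ₁ : γ < 1) (hH : 0 ≤ H) (T : ℕ) :
    ∑ t ∈ Icc 1 T, 2 * H * min 1 (H * γ ^ t) ≤ 2 * H * (log⁺ H + 1) / (1 - γ) := by
  have hsubset : Icc 1 T ⊆ range (T + 1) := fun t ht ↦
    mem_range_succ_iff.2 (mem_Icc.1 ht).2
  rw [← mul_sum, mul_div_assoc]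
  gcongr
  calc ∑ t ∈ Icc 1 T, min 1 (H * γ ^ t)
      ≤ ∑ t ∈ range (T + 1), min 1 (H * γ ^ t) :=
        sum_le_sum_of_subset_of_nonneg hsubset fun t _ _ ↦ by positivity
    _ ≤ (log⁺ H + 1) / (1 - γ) := sum_range_min_one_mul_pow_le hγ₀ hγ₁ hH (T + 1)

/-- Refined cumulative performance-gap bound in Theorem 1: for `γ ∈ (0,1)` and `H ≥ 1`,
`∑_{t=1}^{T} 2H · min(1, H·γ^t) ≤ 2H·(log H + 1)/(1-γ)`. -/
theorem cumulative_gap_le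
    (γ : ℝ) (hγ0 : 0 < γ) (hγ1 : γ < 1) (H : ℝ) (hH : 1 ≤ H) (T : ℕ) :
    ∑ t ∈ Finset.Icc 1 T, 2 * H * min 1 (H * γ ^ t)
      ≤ 2 * H * (Real.log H + 1) / (1 - γ) := by
  rw [← posLog_eq_log (hH.trans (le_abs_self H))]
  exact cumulative_gap_le_general hγ0.le hγ1 (zero_le_one.trans hH) T
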